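/- arXiv:2602.16927 — 2 statements merged into one kernel-verified Lean document; each statement's English description precedes it below -/
import Mathlib

section
/- Let k ≥ 3 be a natural number and let ζ = exp(2πi/2^k). With T = !![1, 0; 0, ζ], X = !![0, 1; 1, 0], and H = (√2)⁻¹ • !![1, 1; 1, −1], the catalyst H · T conjugates the matrix X · !![1, 0; 0, ζ²] to the diagonal matrix !![ζ, 0; 0, −ζ]: (H · T) · (X · !![1, 0; 0, ζ²]) · (H · T)ᴴ = !![ζ, 0; 0, −ζ], where (·)ᴴ denotes the conjugate transpose. (This is the scalar-generator case of the catalysis lemma: the catalytic image X ∘ (1 ⊕ ζ_{k−1}) of ζ_k is conjugated by the catalyst to ζ_k ⊕ ζ_k*.) -/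
/-!
Conjugation by `T` turns `X * diag(1, ζ²)` into `ζ • X`, since `ζ² * conj ζ = ζ` for unimodular `ζ`,
and conjugation by the Hadamard matrix turns `X` into `diag(1, -1)`.
-/

open Complex Matrix

section StarRing

variable {R : Type*}

theorem phase_mul_swap_mul_phase_sq_mul_conjTranspose [Semiring R] [StarRing R] {ζ : R}
    (hζ : ζ * star ζ = 1) :
    !![1, 0; 0, ζ] * (!![0, 1; 1, 0] * !![1, 0; 0, ζ ^ 2]) * !![1, 0; 0, ζ]ᴴ =
      ζ • !![0, 1; 1, 0] := by
  have hζ_sq : ζ ^ 2 * star ζ = ζ := by rw [sq, mul_assoc, hζ, mul_one]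
  ext i j
  fin_cases i <;> fin_cases j <;> simp [Matrix.mul_apply, hζ_sq]

theorem smul_hadamardGate_mul_swap_mul_conjTranspose [Ring R] [StarRing R] (s : R) :
    (s • !![(1 : R), 1; 1, -1]) * !![0, 1; 1, 0] * (s • !![(1 : R), 1; 1, -1])ᴴ =
      (2 * (s * star s)) • !![(1 : R), 0; 0, -1] := by
  ext i j
  fin_cases i <;> fin_cases j <;> simp [Matrix.mul_apply, two_mul]

end StarRing

theorem two_mul_inv_sqrt_two_mul_star :
    2 * ((Real.sqrt 2 : ℂ)⁻¹ * star (Real.sqrt 2 : ℂ)⁻¹) = 1 := by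
  have h_sqrt : (Real.sqrt 2 : ℂ) * Real.sqrt 2 = 2 := by
    exact_mod_cast Real.mul_self_sqrt zero_le_two
  have h_star : star (Real.sqrt 2 : ℂ)⁻¹ = (Real.sqrt 2 : ℂ)⁻¹ := by simp
  rw [h_star, ← mul_inv, h_sqrt, mul_inv_cancel₀ two_ne_zero]

theorem catalysis_scalar_case_general {ζ : ℂ} (hζ : ‖ζ‖ = 1) :
    let T : Matrix (Fin 2) (Fin 2) ℂ := !![1, 0; 0, ζ]
    let X : Matrix (Fin 2) (Fin 2) ℂ := !![0, 1; 1, 0]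
    let H : Matrix (Fin 2) (Fin 2) ℂ := ((Real.sqrt 2 : ℂ))⁻¹ • !![1, 1; 1, -1]
    (H * T) * (X * !![1, 0; 0, ζ ^ 2]) * (H * T)ᴴ = !![ζ, 0; 0, -ζ] := by
  intro T X H
  have hζ_star : ζ * star ζ = 1 := by simp [Complex.mul_conj', hζ]
  have hT : T * (X * !![1, 0; 0, ζ ^ 2]) * Tᴴ = ζ • X :=
    phase_mul_swap_mul_phase_sq_mul_conjTranspose hζ_star
  have hH : H * X * Hᴴ = !![1, 0; 0, -1] := by
    rw [smul_hadamardGate_mul_swap_mul_conjTranspose, two_mul_inv_sqrt_two_mul_star, one_smul]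
  calc (H * T) * (X * !![1, 0; 0, ζ ^ 2]) * (H * T)ᴴ
      = H * (T * (X * !![1, 0; 0, ζ ^ 2]) * Tᴴ) * Hᴴ := by
        simp only [conjTranspose_mul, Matrix.mul_assoc]
    _ = ζ • (H * X * Hᴴ) := by rw [hT, Matrix.mul_smul, Matrix.smul_mul]
    _ = !![ζ, 0; 0, -ζ] := by simp [hH]

theorem catalysis_scalar_case (k : ℕ) (hk : 3 ≤ k) :
    let ζ : ℂ := Complex.exp (2 * Real.pi * I / 2 ^ k)
    let T : Matrix (Fin 2) (Fin 2) ℂ := !![1, 0; 0, ζ]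
    let X : Matrix (Fin 2) (Fin 2) ℂ := !![0, 1; 1, 0]
    let H : Matrix (Fin 2) (Fin 2) ℂ := ((Real.sqrt 2 : ℂ))⁻¹ • !![1, 1; 1, -1]
    (H * T) * (X * !![1, 0; 0, ζ ^ 2]) * (H * T)ᴴ = !![ζ, 0; 0, -ζ] := by
  have hpow : 2 ^ k ≠ 0 := pow_ne_zero k two_ne_zero
  exact catalysis_scalar_case_general
    (mod_cast (Complex.isPrimitiveRoot_exp (2 ^ k) hpow).norm'_eq_one hpow)
end

section
/- Let m, n ≥ 1 be natural numbers and define π : Fin (m·n) → Fin (m·n) by π(x) = n·x mod (m·n − 1) if x ≠ m·n − 1, and π(m·n − 1) = m·n − 1. Then (i) π is a bijection of Fin (m·n), and (ii) π realizes the lexicographic reindexing taking m×n order to n×m order: for all i < m and j < n, π(j·m + i) = i·n + j. -/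
/-- The reindexing map `mn → mn` sending `x ↦ n·x mod (mn − 1)` for `x ≠ mn − 1`,
and fixing `mn − 1`. -/
def transposePerm (m n : ℕ) (x : Fin (m * n)) : Fin (m * n) :=
  if (x : ℕ) = m * n - 1 then x
  else ⟨n * (x : ℕ) % (m * n - 1), by
    have hx := x.isLt
    rcases Nat.eq_zero_or_pos (m * n - 1) with h0 | h0
    · have hx0 : (x : ℕ) = 0 := by omega
      rw [hx0, h0, Nat.mul_zero, Nat.zero_mod]
      exact Nat.lt_of_le_of_lt (Nat.zero_le _) hx
    · exact lt_of_lt_of_le (Nat.mod_lt _ h0) (Nat.sub_le _ _)⟩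

/-!
Since `m * n ≡ 1` modulo `m * n - 1`, multiplying `j * m + i` by `n` gives `i * n + j` modulo
`m * n - 1`. Both positions lie in `[0, m * n - 1]`, and they equal `m * n - 1` simultaneously,
at the corner `i = m - 1`, `j = n - 1`; so the congruence is an equality away from the corner, and
the corner is fixed. Hence the map is the transposition of grid positions, which is invertible.
-/

section Arithmetic

variable {m n i j : ℕ}

theorem mul_add_lt_mul_of_lt_of_lt (hi : i < m) (hj : j < n) : i * n + j < m * n :=
  calc
    i * n + j < i * n + n := Nat.add_lt_add_left hj _
    _ = (i + 1) * n := (Nat.add_one_mul i n).symm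
    _ ≤ m * n := Nat.mul_le_mul_right n hi

theorem mul_add_eq_mul_sub_one_iff (hi : i < m) (hj : j < n) :
    i * n + j = m * n - 1 ↔ i + 1 = m ∧ j + 1 = n := by
  obtain ⟨a, rfl⟩ := Nat.exists_eq_add_of_lt hi
  obtain ⟨b, rfl⟩ := Nat.exists_eq_add_of_lt hj
  have distance_to_corner : (i + a + 1) * (j + b + 1) - 1 =
      i * (j + b + 1) + j + (a * (j + b + 1) + b) := Nat.sub_eq_of_eq_add (by ring)
  rw [distance_to_corner]
  simp

theorem mul_mul_add_modEq (h : 1 ≤ m * n) (i j : ℕ) :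
    n * (j * m + i) ≡ i * n + j [MOD m * n - 1] :=
  calc
    n * (j * m + i) = i * n + j * (m * n) := by ring
    _ ≡ i * n + j * 1 [MOD m * n - 1] := ((Nat.modEq_sub h).mul_left j).add_left _
    _ = i * n + j := by rw [mul_one]

end Arithmetic

section TransposePerm

variable {m n : ℕ}

theorem transposePerm_eq_self {x : Fin (m * n)} (hx : (x : ℕ) = m * n - 1) :
    transposePerm m n x = x :=
  if_pos hx

theorem transposePerm_val_of_ne {x : Fin (m * n)} (hx : (x : ℕ) ≠ m * n - 1) :
    (transposePerm m n x : ℕ) = n * x % (m * n - 1) := by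
  rw [transposePerm, if_neg hx]

theorem transposePerm_val_of_val_eq {i j : ℕ} (hi : i < m) (hj : j < n) {x : Fin (m * n)}
    (hx : (x : ℕ) = j * m + i) : (transposePerm m n x : ℕ) = i * n + j := by
  have index_lt : i * n + j < m * n := mul_add_lt_mul_of_lt_of_lt hi hj
  have corner_iff : (x : ℕ) = m * n - 1 ↔ i * n + j = m * n - 1 := by
    rw [hx, mul_add_eq_mul_sub_one_iff hi hj, mul_comm m n, mul_add_eq_mul_sub_one_iff hj hi,
      and_comm]
  by_cases corner : (x : ℕ) = m * n - 1
  · rw [transposePerm_eq_self corner, corner, corner_iff.1 corner]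
  · have index_lt_pred : i * n + j < m * n - 1 :=
      lt_of_le_of_ne (Nat.le_sub_one_of_lt index_lt) (mt corner_iff.2 corner)
    rw [transposePerm_val_of_ne corner, hx]
    exact Nat.mod_eq_of_modEq (mul_mul_add_modEq (Nat.one_le_of_lt index_lt) i j) index_lt_pred

variable (m n) in
/-- The permutation of `Fin (m * n)` that reads an index as the row-major position `j * m + i` of an
entry `(j, i)` of an `n × m` grid and returns the row-major position `i * n + j` of the transposed
entry `(i, j)` of the `m × n` grid. -/
def gridTranspose : Equiv.Perm (Fin (m * n)) :=
  (finCongr (mul_comm m n)).trans <|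
    finProdFinEquiv.symm.trans <| (Equiv.prodComm (Fin n) (Fin m)).trans finProdFinEquiv

theorem transposePerm_eq_gridTranspose : transposePerm m n = gridTranspose m n := by
  funext x
  obtain ⟨⟨j, i⟩, rfl⟩ := (finProdFinEquiv.trans (finCongr (mul_comm n m))).surjective x
  apply Fin.ext
  rw [transposePerm_val_of_val_eq i.isLt j.isLt (by simp [mul_comm, add_comm])]
  simp [gridTranspose, mul_comm, add_comm]

end TransposePerm

theorem transposePerm_bijective_and_lex (m n : ℕ) (hm : 1 ≤ m) (hn : 1 ≤ n) :
    Function.Bijective (transposePerm m n) ∧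
    ∀ (i j : ℕ) (hi : i < m) (hj : j < n),
      (transposePerm m n ⟨j * m + i, by
        calc j * m + i < j * m + m := by omega
          _ = (j + 1) * m := by ring
          _ ≤ n * m := Nat.mul_le_mul_right m hj
          _ = m * n := Nat.mul_comm n m⟩ : ℕ) = i * n + j := by
  refine ⟨?_, fun i j hi hj => transposePerm_val_of_val_eq hi hj rfl⟩
  rw [transposePerm_eq_gridTranspose]
  exact (gridTranspose m n).bijective
end
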